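/- Let k ≡ 3 (mod 4), k ≥ 7, and let P be the 𝔽₂ A_k-permutation module on 2-subsets of {1,...,k}, with standard orthonormal basis {e_{ij}} and G-invariant bilinear form (·,·). Set f = Σ_{i<j} e_{ij}, P₁ = 𝔽₂ f, P₂ = span{x_i : 1 ≤ i ≤ k} where x_i = Σ_{j≠i} e_{ij}, and P₃ = (P₁ + P₂)^⊥. Then P = P₁ ⊕ P₂ ⊕ P₃ with each summand an irreducible 𝔽₂ A_k-module, dim P₂ = k-1, and the element u = Σ_{2<i<j} e_{ij} lies in P₃. -/

import Mathlib

open Pointwise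

/-- Permutation representation of `G` on `X → F` from an action of `G` on `X`. -/
def permRep (F G X : Type*) [CommRing F] [Group G] [MulAction G X] :
    Representation F G (X → F) where
  toFun g := LinearMap.funLeft F F (fun x => g⁻¹ • x)
  map_one' := by ext v x; simp
  map_mul' g h := by ext v x; simp [LinearMap.funLeft, mul_smul]

variable {F G V : Type*} [CommRing F] [Group G] [AddCommGroup V] [Module F V]

/-- A submodule invariant under a representation. -/
def InvSub (ρ : Representation F G V) (U : Submodule F V) : Prop :=
  ∀ g, ∀ v ∈ U, ρ g v ∈ U

/-- An irreducible (simple) invariant submodule. -/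
def IsIrreducibleSub (ρ : Representation F G V) (U : Submodule F V) : Prop :=
  InvSub ρ U ∧ U ≠ ⊥ ∧ ∀ W ≤ U, InvSub ρ W → W = ⊥ ∨ W = U

/-- The set of 2-element subsets of `{1,…,k}`. -/
def Xk (k : ℕ) := {s : Finset (Fin k) // s.card = 2}

instance (k : ℕ) : Fintype (Xk k) := Subtype.fintype _
instance (k : ℕ) : DecidableEq (Xk k) := Subtype.instDecidableEq

instance (k : ℕ) : MulAction (Equiv.Perm (Fin k)) (Xk k) where
  smul g s := ⟨g • s.1, by rw [Finset.card_smul_finset]; exact s.2⟩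
  one_smul s := Subtype.ext (one_smul _ s.1)
  mul_smul g h s := Subtype.ext (mul_smul g h s.1)

/-- The linear functional `v ↦ ∑_s w s * v s` (standard bilinear form against `w`,
for which the standard basis `{e_s}` is orthonormal). -/
noncomputable def formMap {X : Type*} [Fintype X] [DecidableEq X] (F : Type*) [CommRing F]
    (w : X → F) : (X → F) →ₗ[F] F :=
  ∑ q : X, w q • (LinearMap.proj q : (X → F) →ₗ[F] F)

/-- Orthogonal complement of `U` with respect to the standard form. -/
noncomputable def perpSub {X : Type*} [Fintype X] [DecidableEq X] (F : Type*) [CommRing F]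
    (U : Submodule F (X → F)) : Submodule F (X → F) :=
  ⨅ w : U, LinearMap.ker (formMap F (w : X → F))

/-- `f = Σ_{i<j} e_{ij}`: the all-ones vector. -/
def allOnes (k : ℕ) : Xk k → ZMod 2 := fun _ => 1

/-- `x_i = Σ_j e_{ij}`: the sum of basis vectors over pairs containing `i`. -/
def xVec (k : ℕ) (i : Fin k) : Xk k → ZMod 2 := fun s => if i ∈ s.1 then 1 else 0

/-- `u = Σ_{2<i<j} e_{ij}`: the sum over pairs avoiding `{1,2}` (`{0,1}` in `Fin k`). -/
def uVec (k : ℕ) (hk : 2 ≤ k) : Xk k → ZMod 2 := fun s =>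
  if (⟨0, by omega⟩ : Fin k) ∈ s.1 ∨ (⟨1, by omega⟩ : Fin k) ∈ s.1 then 0 else 1

/-- `P₁ = 𝔽₂·f`. -/
def P1 (k : ℕ) : Submodule (ZMod 2) (Xk k → ZMod 2) :=
  Submodule.span (ZMod 2) {allOnes k}

/-- `P₂ = span{x_i}`, the image of the permutation module on points. -/
def P2 (k : ℕ) : Submodule (ZMod 2) (Xk k → ZMod 2) :=
  Submodule.span (ZMod 2) (Set.range (xVec k))

/-- `P₃ = (P₁ + P₂)^⊥`. -/
noncomputable def P3 (k : ℕ) : Submodule (ZMod 2) (Xk k → ZMod 2) :=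
  perpSub (ZMod 2) (P1 k ⊔ P2 k)

/-!
The stars `x_i` span the image of the incidence map `h ↦ (h_a + h_b)_{ab}` from the permutation
module on points, and `P₃` is cut out by the transposed conditions: total weight and all vertex
degrees vanish. For `k ≡ 3 (mod 4)` both `k` and `k.choose 2` are odd, so evaluating weight and
degrees on `t + h_a + h_b` shows that `P₁ + P₂` meets its complement trivially.

Over the symmetric group, `P₃` is irreducible by James's submodule theorem: the column
antisymmetrizer of a tableau of shape `(k - 2, 2)` maps `v` to `(e, v) e`, where `e` is the
polytabloid, so an invariant submodule either contains the Specht module or is orthogonal to it; and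
every vector orthogonal to all polytabloids lies in `P₁ + P₂`. Irreducibility passes to the
alternating group by Clifford's argument for a subgroup of index 2, because each of `P₂` and `P₃`
has a vector that is fixed by a transposition and is nonzero at a pair fixed by the same
transposition.
-/

section Representation

variable {ρ : Representation F G V} {U W : Submodule F V} {H : Subgroup G} {τ : G}

theorem InvSub.inf (hU : InvSub ρ U) (hW : InvSub ρ W) : InvSub ρ (U ⊓ W) :=
  fun g v hv => ⟨hU g v hv.1, hW g v hv.2⟩

theorem InvSub.sup (hU : InvSub ρ U) (hW : InvSub ρ W) : InvSub ρ (U ⊔ W) := fun g =>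
  show U ⊔ W ≤ (U ⊔ W).comap (ρ g) from
    sup_le (fun v hv => Submodule.mem_sup_left (hU g v hv))
      fun v hv => Submodule.mem_sup_right (hW g v hv)

theorem InvSub.map_of_normal [H.Normal] (hW : InvSub (ρ.comp H.subtype) W) (τ : G) :
    InvSub (ρ.comp H.subtype) (W.map (ρ τ)) := by
  rintro ⟨h, hh⟩ _ ⟨w, hw, rfl⟩
  have hconj : τ⁻¹ * h * τ ∈ H := by
    simpa using ‹H.Normal›.conj_mem h hh τ⁻¹
  refine ⟨ρ (τ⁻¹ * h * τ) w, hW ⟨_, hconj⟩ w hw, ?_⟩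
  simp [← Module.End.mul_apply, ← map_mul, mul_assoc]

theorem InvSub.of_index_two (hH : H.index = 2) (hτ : τ ∉ H) (hW : InvSub (ρ.comp H.subtype) W)
    (hτW : ∀ v ∈ W, ρ τ v ∈ W) : InvSub ρ W := by
  intro g v hv
  by_cases hg : g ∈ H
  · exact hW ⟨g, hg⟩ v hv
  · have hgτ : g * τ⁻¹ ∈ H := by
      simp [Subgroup.mul_mem_iff_of_index_two hH, hg, hτ]
    have hfactor : ρ g v = ρ (g * τ⁻¹) (ρ τ v) := by
      simp [← Module.End.mul_apply, ← map_mul]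
    exact hfactor ▸ hW ⟨_, hgτ⟩ _ (hτW v hv)

-- Clifford's argument: a proper nonzero `W` would give `U = W ⊕ τW`, and a `τ`-fixed vector of
-- `W ⊕ τW` has the form `w + τw`.
theorem IsIrreducibleSub.restrict_of_index_two (hU : IsIrreducibleSub ρ U) (hH : H.index = 2)
    (hτ : τ ∉ H) {u : V} (hu : u ∈ U) (hfix : ρ τ u = u) (hne : ∀ v, v + ρ τ v ≠ u) :
    IsIrreducibleSub (ρ.comp H.subtype) U := by
  refine ⟨fun h => hU.1 h, hU.2.1, fun W hWU hW => ?_⟩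
  have := Subgroup.normal_of_index_eq_two hH
  have hτW : InvSub (ρ.comp H.subtype) (W.map (ρ τ)) := hW.map_of_normal τ
  have hτWU : W.map (ρ τ) ≤ U := Submodule.map_le_iff_le_comap.2 fun w hw => hU.1 τ w (hWU hw)
  have hsq : ∀ w ∈ W, ρ τ (ρ τ w) ∈ W := fun w hw => by
    simpa [map_mul] using hW ⟨τ * τ, Subgroup.mul_self_mem_of_index_two hH τ⟩ w hw
  have hinf : InvSub ρ (W ⊓ W.map (ρ τ)) := (hW.inf hτW).of_index_two hH hτ <| by
    rintro _ ⟨hw, w, hw', rfl⟩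
    exact ⟨hsq w hw', Submodule.mem_map_of_mem hw⟩
  have hsup : InvSub ρ (W ⊔ W.map (ρ τ)) := (hW.sup hτW).of_index_two hH hτ <| by
    intro v hv
    obtain ⟨w, hw, _, ⟨w', hw', rfl⟩, rfl⟩ := Submodule.mem_sup.1 hv
    rw [map_add, add_comm]
    exact Submodule.add_mem_sup (hsq w' hw') (Submodule.mem_map_of_mem hw)
  rcases hU.2.2 _ (inf_le_left.trans hWU) hinf with hbot | htop
  · rcases hU.2.2 _ (sup_le hWU hτWU) hsup with hbot' | htop'
    · exact Or.inl (le_bot_iff.1 (hbot' ▸ le_sup_left))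
    · obtain ⟨w, hw, _, ⟨w', hw', rfl⟩, rfl⟩ := Submodule.mem_sup.1 (htop'.symm ▸ hu)
      have hcomm : ρ τ (w - w') = w - ρ τ (ρ τ w') := by
        rw [map_add] at hfix
        rw [map_sub, sub_eq_sub_iff_add_eq_add, hfix]
      have hzero : ρ τ (w - w') = 0 := (Submodule.mem_bot F).1 <| hbot ▸
        ⟨hcomm ▸ W.sub_mem hw (hsq w' hw'), Submodule.mem_map_of_mem (W.sub_mem hw hw')⟩
      rw [map_sub, sub_eq_zero] at hzero
      exact absurd (by rw [hzero]) (hne w)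
  · exact Or.inr (le_antisymm hWU (htop ▸ inf_le_left))

theorem isIrreducibleSub_span_singleton {K : Type*} [Field K] [Module K V]
    {ρ : Representation K G V} {v : V} (hv : v ≠ 0) (hfix : ∀ g, ρ g v = v) :
    IsIrreducibleSub ρ (Submodule.span K {v}) := by
  have hatom := nonzero_span_atom (K := K) v hv
  refine ⟨fun g w hw => ?_, hatom.1, fun W hW _ => hatom.le_iff.1 hW⟩
  obtain ⟨c, rfl⟩ := Submodule.mem_span_singleton.1 hw
  rwa [map_smul, hfix]

end Representation

section PermRep

variable {X : Type*} [MulAction G X]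

@[simp]
theorem permRep_apply (g : G) (v : X → F) (x : X) : permRep F G X g v x = v (g⁻¹ • x) :=
  rfl

theorem permRep_single [DecidableEq X] (g : G) (x : X) (c : F) :
    permRep F G X g (Pi.single x c) = Pi.single (g • x) c := by
  ext y
  simp only [permRep_apply, Pi.single_apply, inv_smul_eq_iff]

-- In characteristic 2, `v + τv` vanishes at every fixed point of `τ`.
theorem IsIrreducibleSub.permRep_restrict [CharP F 2] {U : Submodule F (X → F)}
    (hU : IsIrreducibleSub (permRep F G X) U) {H : Subgroup G} (hH : H.index = 2) {τ : G}
    (hτ : τ ∉ H) {u : X → F} (hu : u ∈ U) (hfix : permRep F G X τ u = u) {x : X}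
    (hx : τ • x = x) (hux : u x ≠ 0) : IsIrreducibleSub (permRep F H X) U := by
  refine hU.restrict_of_index_two hH hτ hu hfix ?_
  rintro v rfl
  simp [inv_smul_eq_iff.2 hx.symm, CharTwo.add_self_eq_zero] at hux

end PermRep

section Perp

variable {X : Type*} [Fintype X]

theorem isRefl_dotProductBilin :
    LinearMap.BilinForm.IsRefl (dotProductBilin F F : LinearMap.BilinForm F (X → F)) :=
  fun v w h => (dotProduct_comm w v).trans h

theorem nondegenerate_dotProductBilin :
    LinearMap.BilinForm.Nondegenerate (dotProductBilin F F : LinearMap.BilinForm F (X → F)) :=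
  ⟨fun v h => dotProduct_eq_zero v h,
    fun v h => dotProduct_eq_zero v fun w => (dotProduct_comm v w).trans (h w)⟩

theorem dotProduct_permRep [MulAction G X] (g : G) (v w : X → F) :
    permRep F G X g v ⬝ᵥ permRep F G X g w = v ⬝ᵥ w :=
  Equiv.sum_comp (MulAction.toPerm g⁻¹) fun x => v x * w x

variable [DecidableEq X]

theorem formMap_apply (v w : X → F) : formMap F w v = w ⬝ᵥ v := by
  simp [formMap, dotProduct]

theorem mem_perpSub {U : Submodule F (X → F)} {v : X → F} :
    v ∈ perpSub F U ↔ ∀ w ∈ U, w ⬝ᵥ v = 0 := by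
  simp [perpSub, formMap_apply]

theorem mem_perpSub_span {S : Set (X → F)} {v : X → F} :
    v ∈ perpSub F (Submodule.span F S) ↔ ∀ w ∈ S, w ⬝ᵥ v = 0 :=
  mem_perpSub.trans <|
    Submodule.span_le (p := LinearMap.ker ((dotProductBilin F F).flip v))

theorem perpSub_anti {U W : Submodule F (X → F)} (h : U ≤ W) : perpSub F W ≤ perpSub F U :=
  fun _ hv => mem_perpSub.2 fun w hw => mem_perpSub.1 hv w (h hw)

theorem perpSub_sup (U W : Submodule F (X → F)) :
    perpSub F (U ⊔ W) = perpSub F U ⊓ perpSub F W := by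
  refine le_antisymm (le_inf (perpSub_anti le_sup_left) (perpSub_anti le_sup_right)) ?_
  rintro v ⟨hU, hW⟩
  refine mem_perpSub.2 fun w hw => ?_
  obtain ⟨y, hy, z, hz, rfl⟩ := Submodule.mem_sup.1 hw
  rw [add_dotProduct, mem_perpSub.1 hU y hy, mem_perpSub.1 hW z hz, add_zero]

theorem perpSub_eq_orthogonal (U : Submodule F (X → F)) :
    perpSub F U = LinearMap.BilinForm.orthogonal (dotProductBilin F F) U :=
  Submodule.ext fun _ => mem_perpSub

theorem perpSub_perpSub {K : Type*} [Field K] (U : Submodule K (X → K)) :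
    perpSub K (perpSub K U) = U := by
  simp only [perpSub_eq_orthogonal]
  exact LinearMap.BilinForm.orthogonal_orthogonal nondegenerate_dotProductBilin
    isRefl_dotProductBilin U

theorem sup_perpSub_eq_top {K : Type*} [Field K] {U : Submodule K (X → K)}
    (h : Disjoint U (perpSub K U)) : U ⊔ perpSub K U = ⊤ := by
  rw [perpSub_eq_orthogonal] at h ⊢
  exact ((LinearMap.BilinForm.isCompl_orthogonal_iff_disjoint
    isRefl_dotProductBilin).2 h).sup_eq_top

theorem InvSub.perpSub [MulAction G X] {U : Submodule F (X → F)} (hU : InvSub (permRep F G X) U) :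
    InvSub (permRep F G X) (perpSub F U) := by
  intro g v hv
  refine mem_perpSub.2 fun w hw => ?_
  rw [← dotProduct_permRep g⁻¹, ← Module.End.mul_apply, ← map_mul, inv_mul_cancel, map_one]
  exact mem_perpSub.1 hv _ (hU g⁻¹ w hw)

end Perp

section Points

variable {α : Type*} [DecidableEq α]

theorem sub_permRep_swap (h : α → F) (p q : α) :
    h - permRep F (Equiv.Perm α) α (Equiv.swap p q) h =
      (h p - h q) • (Pi.single p 1 - Pi.single q 1) := by
  ext i
  simp only [Pi.sub_apply, permRep_apply, Equiv.swap_inv, Equiv.Perm.smul_def,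
    Equiv.swap_apply_def, Pi.smul_apply, Pi.single_apply, smul_eq_mul]
  grind

theorem single_sub_single_mem_of_invSub {K : Type*} [Field K] {W : Submodule K (α → K)}
    (hW : InvSub (permRep K (Equiv.Perm α) α) W) {h : α → K} (hh : h ∈ W) {p q : α}
    (hpq : h p ≠ h q) (i j : α) : (Pi.single i 1 - Pi.single j 1 : α → K) ∈ W := by
  rcases eq_or_ne i j with rfl | hij
  · simp
  have hp : (Pi.single p 1 - Pi.single q 1 : α → K) ∈ W := by
    rw [← W.smul_mem_iff (sub_ne_zero.2 hpq), ← sub_permRep_swap]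
    exact W.sub_mem hh (hW _ h hh)
  have hne : p ≠ q := fun e => hpq (e ▸ rfl)
  obtain ⟨g, rfl, rfl⟩ := MulAction.is_two_pretransitive_iff.1
    (Equiv.Perm.isMultiplyPretransitive α 2) hne hij
  simpa only [map_sub, permRep_single] using hW g _ hp

end Points

namespace Xk

variable {k : ℕ}

/-- The pair `{a, b}` as a point of `Xk k`. -/
def pair {a b : Fin k} (hab : a ≠ b) : Xk k := ⟨{a, b}, Finset.card_pair hab⟩

theorem exists_eq_pair (s : Xk k) : ∃ (a b : Fin k) (hab : a ≠ b), s = pair hab := by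
  obtain ⟨a, b, hab, hs⟩ := Finset.card_eq_two.1 s.2
  exact ⟨a, b, hab, Subtype.ext hs⟩

@[simp]
theorem mem_pair {a b i : Fin k} (hab : a ≠ b) : i ∈ (pair hab).1 ↔ i = a ∨ i = b := by
  simp [pair]

/-- The basis vector `e_{ab}` of the pair module; it is `0` when `a = b`. -/
def edge (a b : Fin k) : Xk k → F := fun s => if s.1 = {a, b} then 1 else 0

/-- The coordinate of a vector at the pair `{a, b}`, extended by `0` to `a = b` so that vectors
become symmetric functions of two points. -/
noncomputable def coeff (a b : Fin k) : (Xk k → F) →ₗ[F] F := formMap F (edge a b)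

theorem edge_dotProduct (a b : Fin k) (v : Xk k → F) : edge a b ⬝ᵥ v = coeff a b v :=
  (formMap_apply v _).symm

theorem edge_comm (a b : Fin k) : (edge a b : Xk k → F) = edge b a := by
  ext s
  simp only [edge, Finset.pair_comm a b]

@[simp]
theorem edge_self (a : Fin k) : (edge a a : Xk k → F) = 0 := by
  ext s
  refine if_neg fun h => ?_
  simpa [h] using s.2

theorem coeff_comm (a b : Fin k) (v : Xk k → F) : coeff a b v = coeff b a v := by
  rw [coeff, edge_comm, ← coeff]

@[simp]
theorem coeff_self (a : Fin k) (v : Xk k → F) : coeff a a v = 0 := by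
  simp [← edge_dotProduct]

theorem edge_eq_single {a b : Fin k} (hab : a ≠ b) :
    (edge a b : Xk k → F) = Pi.single (pair hab) 1 := by
  ext s
  rw [Pi.single_apply]
  exact if_congr (Subtype.ext_iff (a1 := s) (a2 := pair hab)).symm rfl rfl

theorem coeff_of_ne {a b : Fin k} (hab : a ≠ b) (v : Xk k → F) :
    coeff a b v = v (pair hab) := by
  rw [← edge_dotProduct, edge_eq_single hab, single_one_dotProduct]

theorem ext_coeff {v w : Xk k → F} (h : ∀ a b, a ≠ b → coeff a b v = coeff a b w) : v = w := by
  ext s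
  obtain ⟨a, b, hab, rfl⟩ := exists_eq_pair s
  simpa only [coeff_of_ne hab] using h a b hab

theorem coeff_one {a b : Fin k} (hab : a ≠ b) : coeff a b (1 : Xk k → F) = 1 := by
  rw [coeff_of_ne hab, Pi.one_apply]

theorem coeff_edge {a b : Fin k} (hab : a ≠ b) (x y : Fin k) :
    coeff x y (edge a b : Xk k → F) =
      (Pi.single a 1 : Fin k → F) x * (Pi.single b 1 : Fin k → F) y +
        (Pi.single b 1 : Fin k → F) x * (Pi.single a 1 : Fin k → F) y := by
  rcases eq_or_ne x y with rfl | hxy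
  · simp only [coeff_self, Pi.single_apply]
    grind
  · simp only [coeff_of_ne hxy, edge, pair, ← Finset.coe_inj, Finset.coe_pair,
      Set.pair_eq_pair_iff, Pi.single_apply]
    grind

theorem smul_val (g : Equiv.Perm (Fin k)) (s : Xk k) : (g • s).1 = g • s.1 :=
  rfl

theorem permRep_edge (g : Equiv.Perm (Fin k)) (a b : Fin k) :
    permRep F (Equiv.Perm (Fin k)) (Xk k) g (edge a b) = edge (g a) (g b) := by
  ext s
  simp only [permRep_apply, edge, smul_val, inv_smul_eq_iff, Finset.smul_finset_insert,
    Finset.smul_finset_singleton, Equiv.Perm.smul_def]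

theorem coeff_permRep (g : Equiv.Perm (Fin k)) (v : Xk k → F) (a b : Fin k) :
    coeff a b (permRep F (Equiv.Perm (Fin k)) (Xk k) g v) = coeff (g⁻¹ a) (g⁻¹ b) v := by
  rw [← edge_dotProduct, ← edge_dotProduct, ← permRep_edge, ← dotProduct_permRep g⁻¹,
    ← Module.End.mul_apply, ← map_mul, inv_mul_cancel, map_one, Module.End.one_apply]

/-- The incidence map from points to pairs; it sends the basis vector of `i` to `x_i`. -/
def incidence : (Fin k → F) →ₗ[F] (Xk k → F) :=
  LinearMap.pi fun s => ∑ i ∈ s.1, LinearMap.proj i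

/-- The transpose of the incidence map: the vertex degrees of a weighted graph. -/
def degree : (Xk k → F) →ₗ[F] (Fin k → F) :=
  LinearMap.pi fun i => ∑ s : Xk k with i ∈ s.1, LinearMap.proj s

theorem incidence_apply (h : Fin k → F) (s : Xk k) : incidence h s = ∑ i ∈ s.1, h i := by
  simp [incidence]

theorem incidence_dotProduct (h : Fin k → F) (v : Xk k → F) :
    incidence h ⬝ᵥ v = h ⬝ᵥ degree v := by
  simp only [dotProduct, incidence_apply, degree, LinearMap.pi_apply, LinearMap.sum_apply,
    LinearMap.proj_apply, Finset.sum_mul, Finset.mul_sum]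
  exact Finset.sum_comm' (by simp)

theorem coeff_incidence {a b : Fin k} (hab : a ≠ b) (h : Fin k → F) :
    coeff a b (incidence h) = h a + h b := by
  rw [coeff_of_ne hab, incidence_apply, pair, Finset.sum_pair hab]

theorem permRep_incidence (g : Equiv.Perm (Fin k)) (h : Fin k → F) :
    permRep F (Equiv.Perm (Fin k)) (Xk k) g (incidence h) =
      incidence (permRep F (Equiv.Perm (Fin k)) (Fin k) g h) := by
  refine ext_coeff fun a b hab => ?_
  rw [coeff_permRep, coeff_incidence (g⁻¹.injective.ne hab), coeff_incidence hab]
  rfl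

theorem sum_edge_apply (i : Fin k) (s : Xk k) :
    ∑ j, (edge i j s : F) = if i ∈ s.1 then 1 else 0 := by
  split_ifs with his
  · obtain ⟨j, hij, rfl⟩ : ∃ (j : Fin k) (hij : i ≠ j), s = pair hij := by
      obtain ⟨a, b, hab, rfl⟩ := exists_eq_pair s
      rcases (mem_pair hab).1 his with rfl | rfl
      · exact ⟨b, hab, rfl⟩
      · exact ⟨a, hab.symm, Subtype.ext (Finset.pair_comm _ _)⟩
    rw [Finset.sum_eq_single_of_mem j (Finset.mem_univ j)]
    · simp [edge, pair]
    · intro l _ hl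
      refine if_neg fun h => hl ?_
      have hmem : j ∈ ({i, l} : Finset (Fin k)) := h ▸ (mem_pair hij).2 (Or.inr rfl)
      simpa [hij.symm, eq_comm] using hmem
  · exact Finset.sum_eq_zero fun j _ => if_neg fun h => his (by simp [h])

theorem degree_apply (v : Xk k → F) (i : Fin k) : degree v i = ∑ j, coeff i j v := by
  simp only [← edge_dotProduct, dotProduct]
  rw [Finset.sum_comm]
  simp only [← Finset.sum_mul, sum_edge_apply, ite_mul, one_mul, zero_mul, ← Finset.sum_filter]
  simp [degree]

theorem degree_one (i : Fin k) : degree (1 : Xk k → F) i = k - 1 := by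
  rw [degree_apply, ← Finset.add_sum_erase _ _ (Finset.mem_univ i), coeff_self, zero_add,
    Finset.sum_congr rfl fun j hj => coeff_one (Finset.ne_of_mem_erase hj).symm]
  have : 1 ≤ k := i.pos
  simp [Nat.cast_sub this]

theorem degree_incidence (h : Fin k → F) (i : Fin k) :
    degree (incidence h) i = (k - 2) * h i + ∑ j, h j := by
  rw [degree_apply, ← Finset.add_sum_erase _ _ (Finset.mem_univ i), coeff_self, zero_add,
    Finset.sum_congr rfl fun j hj => coeff_incidence (Finset.ne_of_mem_erase hj).symm h,
    Finset.sum_add_distrib, ← Finset.add_sum_erase _ h (Finset.mem_univ i)]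
  have : 1 ≤ k := i.pos
  simp [Nat.cast_sub this]
  ring

theorem degree_edge {a b : Fin k} (hab : a ≠ b) :
    degree (edge a b : Xk k → F) = Pi.single a 1 + Pi.single b 1 := by
  ext i
  rw [← one_mul (degree _ i), ← single_dotProduct, ← incidence_dotProduct, dotProduct_comm,
    edge_dotProduct, coeff_incidence hab]
  simp [Pi.single_apply, eq_comm]

theorem one_dotProduct_one : (1 : Xk k → F) ⬝ᵥ 1 = k.choose 2 := by
  have hcard : Fintype.card (Xk k) = k.choose 2 :=
    (Fintype.card_finset_len 2).trans (by rw [Fintype.card_fin])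
  simp [← hcard]

theorem one_dotProduct_incidence (h : Fin k → F) :
    (1 : Xk k → F) ⬝ᵥ incidence h = (k - 1) * ∑ i, h i := by
  rw [dotProduct_comm, incidence_dotProduct, funext degree_one]
  rw [mul_comm, Finset.sum_mul]
  rfl

theorem incidence_eq_zero_iff [CharP F 2] {h : Fin k → F} :
    incidence h = 0 ↔ ∀ a b, h a = h b := by
  refine ⟨fun h0 a b => ?_, fun hconst => ext_coeff fun a b hab => ?_⟩
  · rcases eq_or_ne a b with rfl | hab
    · rfl
    · rw [← CharTwo.add_eq_zero, ← coeff_incidence hab, h0, map_zero]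
  · rw [coeff_incidence hab, map_zero, CharTwo.add_eq_zero, hconst a b]

theorem ker_incidence [CharP F 2] [NeZero k] :
    LinearMap.ker (incidence : (Fin k → F) →ₗ[F] _) = Submodule.span F {1} := by
  ext h
  rw [LinearMap.mem_ker, incidence_eq_zero_iff, Submodule.mem_span_singleton]
  refine ⟨fun hconst => ⟨h 0, ?_⟩, ?_⟩
  · ext a
    simp [hconst a 0]
  · rintro ⟨c, rfl⟩ _ _
    rfl

theorem finrank_range_incidence {K : Type*} [Field K] [CharP K 2] [NeZero k] :
    Module.finrank K (LinearMap.range (incidence : (Fin k → K) →ₗ[K] _)) = k - 1 := by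
  have hrank := LinearMap.finrank_range_add_finrank_ker (incidence : (Fin k → K) →ₗ[K] _)
  rw [ker_incidence, finrank_span_singleton one_ne_zero, Module.finrank_fin_fun] at hrank
  omega

/-- The polytabloid of a tableau of shape `(k - 2, 2)` whose two columns of length two are
`(t 0, t 1)` and `(t 2, t 3)`; a tabloid is recorded by its second row. -/
def polytabloid (t : Fin 4 ↪ Fin k) : Xk k → F :=
  edge (t 0) (t 2) - edge (t 0) (t 3) - edge (t 1) (t 2) + edge (t 1) (t 3)

theorem polytabloid_dotProduct (t : Fin 4 ↪ Fin k) (v : Xk k → F) :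
    polytabloid t ⬝ᵥ v = coeff (t 0) (t 2) v - coeff (t 0) (t 3) v - coeff (t 1) (t 2) v +
      coeff (t 1) (t 3) v := by
  simp only [polytabloid, add_dotProduct, sub_dotProduct, edge_dotProduct]

theorem permRep_polytabloid (g : Equiv.Perm (Fin k)) (t : Fin 4 ↪ Fin k) :
    permRep F (Equiv.Perm (Fin k)) (Xk k) g (polytabloid t) = polytabloid (g • t) := by
  simp only [polytabloid, map_add, map_sub, permRep_edge]
  rfl

theorem coeff_sub_permRep_swap {a b : Fin k} {w : Xk k → F} (hw : coeff a b w = 0)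
    {x y : Fin k} (hxy : x ≠ y) :
    coeff x y (w - permRep F (Equiv.Perm (Fin k)) (Xk k) (Equiv.swap a b) w) =
      (Pi.single a 1 - Pi.single b 1 : Fin k → F) x * (coeff a y w - coeff b y w) +
        (Pi.single a 1 - Pi.single b 1 : Fin k → F) y * (coeff a x w - coeff b x w) := by
  have hw' : coeff b a w = 0 := coeff_comm b a w ▸ hw
  have hx := coeff_comm x a w
  have hx' := coeff_comm x b w
  have ha := coeff_self a w
  have hb := coeff_self b w
  simp only [map_sub, coeff_permRep, Equiv.swap_inv, Equiv.swap_apply_def, Pi.sub_apply,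
    Pi.single_apply]
  grind

theorem column_antisymmetrizer_apply (t : Fin 4 ↪ Fin k) (v : Xk k → F) :
    ((1 - permRep F (Equiv.Perm (Fin k)) (Xk k) (Equiv.swap (t 0) (t 1))) *
      (1 - permRep F (Equiv.Perm (Fin k)) (Xk k) (Equiv.swap (t 2) (t 3)))) v =
      (polytabloid t ⬝ᵥ v) • polytabloid t := by
  have h02 : t 0 ≠ t 2 := by simp
  have h03 : t 0 ≠ t 3 := by simp
  have h12 : t 1 ≠ t 2 := by simp
  have h13 : t 1 ≠ t 3 := by simp
  set w := v - permRep F (Equiv.Perm (Fin k)) (Xk k) (Equiv.swap (t 2) (t 3)) v with hw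
  have hrow (y : Fin k) : coeff (t 0) y w - coeff (t 1) y w =
      (polytabloid t ⬝ᵥ v) * (Pi.single (t 2) 1 - Pi.single (t 3) 1 : Fin k → F) y := by
    have hswap := congrFun (sub_permRep_swap (F := F)
      (fun z => coeff (t 0) z v - coeff (t 1) z v) (t 2) (t 3)) y
    simp only [Pi.sub_apply, permRep_apply, Equiv.swap_inv, Equiv.Perm.smul_def, Pi.smul_apply,
      smul_eq_mul] at hswap
    rw [polytabloid_dotProduct]
    simp only [hw, map_sub, coeff_permRep, Equiv.swap_inv, Pi.sub_apply,
      Equiv.swap_apply_of_ne_of_ne h02 h03, Equiv.swap_apply_of_ne_of_ne h12 h13]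
    linear_combination hswap
  have hw01 : coeff (t 0) (t 1) w = 0 := by
    simpa using hrow (t 1)
  refine ext_coeff fun x y hxy => ?_
  change coeff x y (w - permRep F (Equiv.Perm (Fin k)) (Xk k) (Equiv.swap (t 0) (t 1)) w) = _
  rw [coeff_sub_permRep_swap hw01 hxy, hrow, hrow]
  simp only [polytabloid, map_smul, map_add, map_sub, smul_eq_mul, Pi.sub_apply, coeff_edge h02,
    coeff_edge h03, coeff_edge h12, coeff_edge h13]
  ring

variable (F k) in
/-- The Specht module `S^(k-2,2)`, realised inside the pair module. -/
def specht : Submodule F (Xk k → F) :=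
  Submodule.span F (Set.range polytabloid)

theorem polytabloid_mem_of_invSub {K : Type*} [Field K] {W : Submodule K (Xk k → K)}
    (hW : InvSub (permRep K (Equiv.Perm (Fin k)) (Xk k)) W) {v : Xk k → K} (hv : v ∈ W)
    {t : Fin 4 ↪ Fin k} (ht : polytabloid t ⬝ᵥ v ≠ 0) : polytabloid t ∈ W := by
  rw [← W.smul_mem_iff ht, ← column_antisymmetrizer_apply]
  have hsub (g : Equiv.Perm (Fin k)) {w : Xk k → K} (hw : w ∈ W) :
      (1 - permRep K (Equiv.Perm (Fin k)) (Xk k) g) w ∈ W := W.sub_mem hw (hW g w hw)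
  exact hsub _ (hsub _ hv)

theorem specht_le_of_polytabloid_mem {W : Submodule F (Xk k → F)}
    (hW : InvSub (permRep F (Equiv.Perm (Fin k)) (Xk k)) W) {t : Fin 4 ↪ Fin k}
    (ht : polytabloid t ∈ W) : specht F k ≤ W := by
  refine Submodule.span_le.2 ?_
  rintro _ ⟨t', rfl⟩
  obtain ⟨g, rfl⟩ := (Equiv.Perm.isMultiplyPretransitive (Fin k) 4).exists_smul_eq t t'
  exact permRep_polytabloid (F := F) g t ▸ hW g _ ht

-- James's submodule theorem for the partition `(k - 2, 2)`.
theorem specht_le_or_le_perpSub_specht {K : Type*} [Field K] {W : Submodule K (Xk k → K)}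
    (hW : InvSub (permRep K (Equiv.Perm (Fin k)) (Xk k)) W) :
    specht K k ≤ W ∨ W ≤ perpSub K (specht K k) := by
  refine or_iff_not_imp_right.2 fun hle => ?_
  obtain ⟨v, hv, hnot⟩ := SetLike.not_le_iff_exists.1 hle
  simp only [specht, mem_perpSub_span, Set.forall_mem_range, not_forall] at hnot
  obtain ⟨t, ht⟩ := hnot
  exact specht_le_of_polytabloid_mem hW (polytabloid_mem_of_invSub hW hv ht)

theorem coeff_sub_coeff_eq_of_mem_perpSub_specht {v : Xk k → F} (hv : v ∈ perpSub F (specht F k))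
    {a b c d : Fin k} (hab : a ≠ b) (hac : a ≠ c) (had : a ≠ d) (hbc : b ≠ c) (hbd : b ≠ d) :
    coeff a c v - coeff b c v = coeff a d v - coeff b d v := by
  rcases eq_or_ne c d with rfl | hcd
  · rfl
  have hinj : Function.Injective ![a, b, c, d] := by
    simp [Function.Injective, Fin.forall_fin_succ, *, hab.symm, hac.symm,
      had.symm, hbc.symm, hbd.symm, hcd.symm]
  have h := mem_perpSub_span.1 hv _ ⟨⟨_, hinj⟩, rfl⟩
  rw [polytabloid_dotProduct] at h
  simp only [Function.Embedding.coeFn_mk] at h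
  change coeff a c v - coeff a d v - coeff b c v + coeff b d v = 0 at h
  linear_combination h

-- Fix a point `o`. The polytabloid relations make `v_{xy} - v_{ox} - v_{oy}` independent of the
-- distinct points `x, y ≠ o`.
theorem exists_eq_smul_one_add_incidence (hk : 3 ≤ k) {v : Xk k → F}
    (hv : v ∈ perpSub F (specht F k)) : ∃ (t : F) (h : Fin k → F), v = t • 1 + incidence h := by
  obtain ⟨o, p, q, hp, hq, hpq⟩ : ∃ o p q : Fin k, p ≠ o ∧ q ≠ o ∧ p ≠ q :=
    ⟨⟨0, by omega⟩, ⟨1, by omega⟩, ⟨2, by omega⟩, by simp, by simp, by simp⟩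
  let defect (x y : Fin k) : F := coeff x y v - coeff o x v - coeff o y v
  have defect_comm (x y : Fin k) : defect x y = defect y x := by
    simp only [defect, coeff_comm x y]
    ring
  have defect_right {x y z : Fin k} (hx : x ≠ o) (hy : y ≠ o) (hz : z ≠ o) (hxy : x ≠ y)
      (hxz : x ≠ z) : defect x y = defect x z := by
    have h := coeff_sub_coeff_eq_of_mem_perpSub_specht hv hx hxy hxz hy.symm hz.symm
    simp only [defect]
    linear_combination h
  have defect_eq {x y : Fin k} (hx : x ≠ o) (hy : y ≠ o) (hxy : x ≠ y) :
      defect x y = defect p q := by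
    rcases eq_or_ne x q with rfl | hxq
    · rw [defect_right hx hy hp hxy hpq.symm, defect_comm]
    · rw [defect_right hx hy hq hxy hxq, defect_comm, defect_right hq hx hp hxq.symm hpq.symm,
        defect_comm]
  let h : Fin k → F := Function.update (fun x => coeff o x v) o (-defect p q)
  have h_of_ne {x : Fin k} (hx : x ≠ o) : h x = coeff o x v := Function.update_of_ne hx _ _
  have h_o : h o = -defect p q := Function.update_self _ _ _
  refine ⟨defect p q, h, ext_coeff fun x y hxy => ?_⟩
  rw [map_add, map_smul, coeff_one hxy, coeff_incidence hxy, smul_eq_mul, mul_one]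
  rcases eq_or_ne x o with rfl | hx
  · rw [h_o, h_of_ne hxy.symm, add_neg_cancel_left]
  · rcases eq_or_ne y o with rfl | hy
    · rw [h_o, h_of_ne hx, coeff_comm, add_comm, neg_add_cancel_right]
    · rw [← defect_eq hx hy hxy, h_of_ne hx, h_of_ne hy]
      ring

variable (F k) in
/-- The sum `P₁ + P₂` over an arbitrary coefficient ring. -/
def starSpan : Submodule F (Xk k → F) :=
  Submodule.span F {1} ⊔ LinearMap.range incidence

theorem mem_starSpan {v : Xk k → F} :
    v ∈ starSpan F k ↔ ∃ (t : F) (h : Fin k → F), t • 1 + incidence h = v := by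
  simp only [starSpan, Submodule.mem_sup, Submodule.mem_span_singleton, LinearMap.mem_range,
    exists_exists_eq_and]

theorem mem_perpSub_starSpan {v : Xk k → F} :
    v ∈ perpSub F (starSpan F k) ↔ 1 ⬝ᵥ v = 0 ∧ degree v = 0 := by
  rw [starSpan, perpSub_sup, Submodule.mem_inf, mem_perpSub_span, mem_perpSub,
    ← dotProduct_eq_zero_iff]
  simp only [Set.mem_singleton_iff, forall_eq, LinearMap.mem_range, forall_exists_index,
    forall_apply_eq_imp_iff, incidence_dotProduct, dotProduct_comm (degree v)]

theorem invSub_starSpan : InvSub (permRep F (Equiv.Perm (Fin k)) (Xk k)) (starSpan F k) := by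
  intro g v hv
  obtain ⟨t, h, rfl⟩ := mem_starSpan.1 hv
  rw [map_add, permRep_incidence, map_smul]
  exact mem_starSpan.2 ⟨t, _, rfl⟩

theorem invSub_range_incidence :
    InvSub (permRep F (Equiv.Perm (Fin k)) (Xk k)) (LinearMap.range incidence) := by
  rintro g _ ⟨h, rfl⟩
  exact ⟨_, (permRep_incidence g h).symm⟩

theorem perpSub_specht_le_starSpan (hk : 3 ≤ k) : perpSub F (specht F k) ≤ starSpan F k := by
  intro v hv
  obtain ⟨t, h, rfl⟩ := exists_eq_smul_one_add_incidence hk hv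
  exact mem_starSpan.2 ⟨t, h, rfl⟩

theorem perpSub_starSpan_le_specht {K : Type*} [Field K] (hk : 3 ≤ k) :
    perpSub K (starSpan K k) ≤ specht K k := by
  rw [← perpSub_perpSub (specht K k)]
  exact perpSub_anti (perpSub_specht_le_starSpan hk)

section CharTwo

variable [CharP F 2]

theorem disjoint_span_one_range_incidence (hk : 3 ≤ k) :
    Disjoint (Submodule.span F {(1 : Xk k → F)}) (LinearMap.range incidence) := by
  refine Submodule.disjoint_def.2 ?_
  rintro _ ht ⟨h, rfl⟩
  obtain ⟨t, ht⟩ := Submodule.mem_span_singleton.1 ht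
  have hsum {a b : Fin k} (hab : a ≠ b) : t = h a + h b := by
    rw [← coeff_incidence hab, ← ht, map_smul, coeff_one hab, smul_eq_mul, mul_one]
  have h01 := hsum (a := ⟨0, by omega⟩) (b := ⟨1, by omega⟩) (by simp)
  have h02 := hsum (a := ⟨0, by omega⟩) (b := ⟨2, by omega⟩) (by simp)
  have h12 := hsum (a := ⟨1, by omega⟩) (b := ⟨2, by omega⟩) (by simp)
  have ht0 : t = 0 := by
    linear_combination h01 - h02 - h12 + (t - h ⟨2, by omega⟩) * CharTwo.two_eq_zero (R := F)
  rw [← ht, ht0, zero_smul]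

theorem natCast_eq_one_of_odd {n : ℕ} (hn : Odd n) : (n : F) = 1 := by
  rw [CharTwo.natCast_eq_ite, if_neg (Nat.not_even_iff_odd.2 hn)]

theorem disjoint_starSpan_perpSub (hodd : Odd k) (hchoose : Odd (k.choose 2)) :
    Disjoint (starSpan F k) (perpSub F (starSpan F k)) := by
  refine Submodule.disjoint_def.2 fun v hv hperp => ?_
  obtain ⟨t, h, rfl⟩ := mem_starSpan.1 hv
  obtain ⟨hone, hdeg⟩ := mem_perpSub_starSpan.1 hperp
  have hk1 : (k : F) = 1 := natCast_eq_one_of_odd hodd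
  have ht : t = 0 := by
    rwa [dotProduct_add, dotProduct_smul, one_dotProduct_one, one_dotProduct_incidence,
      natCast_eq_one_of_odd hchoose, hk1, sub_self, zero_mul, add_zero, smul_eq_mul,
      mul_one] at hone
  subst ht
  have hconst (i : Fin k) : h i = ∑ j, h j := by
    have := congrFun hdeg i
    rw [zero_smul, zero_add, degree_incidence, hk1, CharTwo.two_eq_zero, sub_zero, one_mul] at this
    exact CharTwo.add_eq_zero.1 this
  rw [zero_smul, zero_add, incidence_eq_zero_iff]
  exact fun a b => (hconst a).trans (hconst b).symm

theorem incidence_single_mem_of_invSub {K : Type*} [Field K] [CharP K 2] (hodd : Odd k)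
    {W : Submodule K (Xk k → K)} (hW : InvSub (permRep K (Equiv.Perm (Fin k)) (Xk k)) W)
    {h : Fin k → K} (hh : incidence h ∈ W) (h0 : incidence h ≠ 0) (i : Fin k) :
    incidence (Pi.single i 1) ∈ W := by
  have hcomap : InvSub (permRep K (Equiv.Perm (Fin k)) (Fin k)) (W.comap incidence) :=
    fun g f hf => Submodule.mem_comap.2 (permRep_incidence g f ▸ hW g _ hf)
  obtain ⟨p, q, hpq⟩ : ∃ p q, h p ≠ h q := by
    simpa [incidence_eq_zero_iff] using h0
  have hsum : ∑ j : Fin k, (Pi.single i 1 - Pi.single j 1 : Fin k → K) = Pi.single i 1 - 1 := by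
    rw [Finset.sum_sub_distrib, Finset.sum_const, Finset.card_fin,
      ← Nat.cast_smul_eq_nsmul K, natCast_eq_one_of_odd hodd, one_smul]
    exact congrArg _ (Finset.univ_sum_single 1)
  have hmem := (W.comap incidence).sum_mem (t := Finset.univ) fun j _ =>
    single_sub_single_mem_of_invSub hcomap hh hpq i j
  rwa [hsum, Submodule.mem_comap, map_sub,
    (incidence_eq_zero_iff (h := 1)).2 fun _ _ => rfl, sub_zero] at hmem

theorem isIrreducibleSub_range_incidence {K : Type*} [Field K] [CharP K 2] (hk : 2 ≤ k)
    (hodd : Odd k) :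
    IsIrreducibleSub (permRep K (Equiv.Perm (Fin k)) (Xk k)) (LinearMap.range incidence) := by
  refine ⟨invSub_range_incidence, ?_, fun W hW hinv => or_iff_not_imp_left.2 fun hne => ?_⟩
  · let i : Fin k := ⟨0, by omega⟩
    let j : Fin k := ⟨1, by omega⟩
    have hij : i ≠ j := by simp [i, j]
    refine (Submodule.ne_bot_iff _).2 ⟨_, ⟨Pi.single i 1, rfl⟩, fun h => ?_⟩
    simpa [hij] using incidence_eq_zero_iff.1 h i j
  · obtain ⟨w, hw, hw0⟩ := W.ne_bot_iff.1 hne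
    obtain ⟨h, rfl⟩ := hW hw
    refine le_antisymm hW ?_
    rw [LinearMap.range_eq_map, ← (Pi.basisFun K (Fin k)).span_eq, Submodule.map_span_le]
    rintro _ ⟨i, rfl⟩
    simpa using incidence_single_mem_of_invSub hodd hinv hw hw0 i

theorem isIrreducibleSub_perpSub_starSpan {K : Type*} [Field K] [CharP K 2] (hk : 3 ≤ k)
    (hodd : Odd k) (hchoose : Odd (k.choose 2)) (hne : perpSub K (starSpan K k) ≠ ⊥) :
    IsIrreducibleSub (permRep K (Equiv.Perm (Fin k)) (Xk k)) (perpSub K (starSpan K k)) := by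
  refine ⟨invSub_starSpan.perpSub, hne, fun W hW hinv => ?_⟩
  rcases specht_le_or_le_perpSub_specht hinv with hspecht | hperp
  · exact Or.inr (hW.antisymm ((perpSub_starSpan_le_specht hk).trans hspecht))
  · exact Or.inl <| le_bot_iff.1 <| disjoint_starSpan_perpSub hodd hchoose
      (hperp.trans (perpSub_specht_le_starSpan hk)) hW

end CharTwo

theorem xVec_eq_incidence_single (i : Fin k) : xVec k i = incidence (Pi.single i 1) := by
  ext s
  simp [xVec, incidence_apply, Pi.single_apply]

theorem P2_eq_range_incidence (k : ℕ) :
    P2 k = LinearMap.range (incidence : (Fin k → ZMod 2) →ₗ[ZMod 2] _) := by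
  rw [LinearMap.range_eq_map, ← (Pi.basisFun (ZMod 2) (Fin k)).span_eq, Submodule.map_span,
    ← Set.range_comp, P2]
  exact congrArg _ (congrArg _ (funext fun i => by
    simp [xVec_eq_incidence_single]))

theorem P1_sup_P2_eq_starSpan (k : ℕ) : P1 k ⊔ P2 k = starSpan (ZMod 2) k := by
  rw [P2_eq_range_incidence]
  rfl

theorem P3_eq_perpSub_starSpan (k : ℕ) : P3 k = perpSub (ZMod 2) (starSpan (ZMod 2) k) := by
  rw [P3, P1_sup_P2_eq_starSpan]

theorem uVec_eq (hk : 2 ≤ k) :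
    uVec k hk = 1 + incidence (Pi.single ⟨0, by omega⟩ 1 + Pi.single ⟨1, by omega⟩ 1) +
      edge ⟨0, by omega⟩ ⟨1, by omega⟩ := by
  have h01 : (⟨0, by omega⟩ : Fin k) ≠ ⟨1, by omega⟩ := by simp
  refine ext_coeff fun a b hab => ?_
  rw [map_add, map_add, coeff_one hab, coeff_incidence hab, coeff_edge h01, coeff_of_ne hab]
  simp only [uVec, mem_pair, Pi.add_apply, Pi.single_apply]
  split_ifs <;> grind

theorem uVec_apply_pair (hk : 2 ≤ k) {a b : Fin k} (hab : a ≠ b) (ha : 2 ≤ a.1) (hb : 2 ≤ b.1) :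
    uVec k hk (pair hab) = 1 := by
  refine if_neg ?_
  simp only [mem_pair, Fin.ext_iff]
  omega

theorem permRep_swap_uVec (hk : 2 ≤ k) :
    permRep (ZMod 2) (Equiv.Perm (Fin k)) (Xk k) (Equiv.swap ⟨0, by omega⟩ ⟨1, by omega⟩)
      (uVec k hk) = uVec k hk := by
  simp only [uVec_eq, map_add, permRep_incidence, permRep_single, permRep_edge,
    Equiv.Perm.smul_def, Equiv.swap_apply_left, Equiv.swap_apply_right]
  rw [add_comm (incidence (Pi.single _ _)), edge_comm]
  rfl

theorem uVec_mem_P3 (hk : 2 ≤ k) (hodd : Odd k) (hchoose : Odd (k.choose 2)) :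
    uVec k hk ∈ P3 k := by
  have h01 : (⟨0, by omega⟩ : Fin k) ≠ ⟨1, by omega⟩ := by simp
  have hk1 : (k : ZMod 2) = 1 := natCast_eq_one_of_odd hodd
  have hsum : ∑ j : Fin k, (Pi.single ⟨0, by omega⟩ 1 + Pi.single ⟨1, by omega⟩ 1 :
      Fin k → ZMod 2) j = 0 := by
    simp [Finset.sum_add_distrib, CharTwo.add_self_eq_zero]
  rw [P3_eq_perpSub_starSpan, mem_perpSub_starSpan, uVec_eq]
  constructor
  · rw [dotProduct_add, dotProduct_add, one_dotProduct_one, one_dotProduct_incidence, hsum,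
      natCast_eq_one_of_odd hchoose, dotProduct_comm, edge_dotProduct, coeff_one h01, mul_zero,
      add_zero, CharTwo.add_self_eq_zero]
  · ext i
    rw [map_add, map_add, Pi.add_apply, Pi.add_apply, degree_one, degree_incidence, hsum,
      degree_edge h01, hk1, Pi.zero_apply]
    ring

-- The pair `{t 2, t 3}` is fixed by the odd permutation swapping `t 0` and `t 1`.
theorem isIrreducibleSub_alternatingGroup [CharP F 2] {U : Submodule F (Xk k → F)}
    (hU : IsIrreducibleSub (permRep F (Equiv.Perm (Fin k)) (Xk k)) U) (t : Fin 4 ↪ Fin k)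
    {u : Xk k → F} (hu : u ∈ U)
    (hfix : permRep F (Equiv.Perm (Fin k)) (Xk k) (Equiv.swap (t 0) (t 1)) u = u)
    (hne : coeff (t 2) (t 3) u ≠ 0) :
    IsIrreducibleSub (permRep F (alternatingGroup (Fin k)) (Xk k)) U := by
  have h01 : t 0 ≠ t 1 := by simp
  have h23 : t 2 ≠ t 3 := by simp
  have : Nontrivial (Fin k) := ⟨_, _, h01⟩
  have hpair : Equiv.swap (t 0) (t 1) • pair h23 = pair h23 := by
    refine Subtype.ext ?_
    rw [smul_val]
    simp [pair, Finset.smul_finset_insert, Equiv.swap_apply_of_ne_of_ne]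
  refine hU.permRep_restrict alternatingGroup.index_eq_two ?_ hu hfix hpair
    (coeff_of_ne h23 u ▸ hne)
  simp [Equiv.Perm.mem_alternatingGroup, Equiv.Perm.sign_swap h01]

theorem isIrreducibleSub_P1 (hk : 2 ≤ k) (G : Subgroup (Equiv.Perm (Fin k))) :
    IsIrreducibleSub (permRep (ZMod 2) G (Xk k)) (P1 k) := by
  refine isIrreducibleSub_span_singleton ?_ fun _ => rfl
  have hpair : (⟨0, by omega⟩ : Fin k) ≠ ⟨1, by omega⟩ := by simp
  exact fun h => one_ne_zero (congrFun h (pair hpair))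

theorem isIrreducibleSub_P2 (hk : 4 ≤ k) (hodd : Odd k) :
    IsIrreducibleSub (permRep (ZMod 2) (alternatingGroup (Fin k)) (Xk k)) (P2 k) := by
  let t : Fin 4 ↪ Fin k := Fin.castLEEmb hk
  rw [P2_eq_range_incidence]
  refine isIrreducibleSub_alternatingGroup (isIrreducibleSub_range_incidence (by omega) hodd) t
    ⟨Pi.single (t 2) 1, rfl⟩ ?_ ?_
  · rw [permRep_incidence, permRep_single, Equiv.Perm.smul_def,
      Equiv.swap_apply_of_ne_of_ne (by simp) (by simp)]
  · rw [coeff_incidence (by simp)]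
    simp

theorem isIrreducibleSub_P3 (hk : 4 ≤ k) (hodd : Odd k) (hchoose : Odd (k.choose 2)) :
    IsIrreducibleSub (permRep (ZMod 2) (alternatingGroup (Fin k)) (Xk k)) (P3 k) := by
  let t : Fin 4 ↪ Fin k := Fin.castLEEmb hk
  have hmem : uVec k (by omega) ∈ P3 k := uVec_mem_P3 _ hodd hchoose
  have hcoeff : coeff (t 2) (t 3) (uVec k (by omega)) ≠ 0 := by
    rw [coeff_of_ne (by simp), uVec_apply_pair _ _ (Nat.le_refl 2) (Nat.le_succ 2)]
    exact one_ne_zero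
  have hne : P3 k ≠ ⊥ := (Submodule.ne_bot_iff _).2
    ⟨_, hmem, fun h => hcoeff (by rw [h, map_zero])⟩
  rw [P3_eq_perpSub_starSpan] at hmem hne ⊢
  exact isIrreducibleSub_alternatingGroup
    (isIrreducibleSub_perpSub_starSpan (by omega) hodd hchoose hne) t hmem
    (permRep_swap_uVec _) hcoeff

theorem odd_choose_two (hmod : k % 4 = 3) : Odd (k.choose 2) := by
  obtain ⟨m, rfl⟩ : ∃ m, k = 4 * m + 3 := ⟨k / 4, by omega⟩
  rw [Nat.choose_two_right]
  have : (4 * m + 3) * (4 * m + 3 - 1) = 2 * (2 * (4 * m ^ 2 + 5 * m + 1) + 1) := by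
    rw [show 4 * m + 3 - 1 = 4 * m + 2 from rfl]
    ring
  rw [this, Nat.mul_div_cancel_left _ two_pos]
  exact odd_two_mul_add_one _

end Xk

/-- **(Guralnick–Liebeck, Section 4.)** Let `k ≡ 3 (mod 4)`, `k ≥ 7`, and let `P` be the
`𝔽₂ A_k`-permutation module on 2-subsets of `{1,…,k}`. With `f = Σ e_{ij}`,
`P₁ = 𝔽₂ f`, `P₂ = span{x_i}` (`x_i = Σ_j e_{ij}`), and `P₃ = (P₁+P₂)^⊥` with respect to
the standard `G`-invariant form, we have `P = P₁ ⊕ P₂ ⊕ P₃` with each summand an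
irreducible `𝔽₂ A_k`-module (`P₁ ≅ 𝔽₂`, `P₂ ≅ S^(k-1,1)`, `P₃ ≅ S^(k-2,2)`),
`dim P₂ = k - 1`, and `u = Σ_{2<i<j} e_{ij}` lies in `P₃`. -/
theorem perm_module_decomposition (k : ℕ) (hk : 7 ≤ k) (hmod : k % 4 = 3) :
    Disjoint (P1 k) (P2 k) ∧
    Disjoint (P1 k ⊔ P2 k) (P3 k) ∧
    P1 k ⊔ P2 k ⊔ P3 k = ⊤ ∧
    IsIrreducibleSub (permRep (ZMod 2) (alternatingGroup (Fin k)) (Xk k)) (P1 k) ∧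
    IsIrreducibleSub (permRep (ZMod 2) (alternatingGroup (Fin k)) (Xk k)) (P2 k) ∧
    IsIrreducibleSub (permRep (ZMod 2) (alternatingGroup (Fin k)) (Xk k)) (P3 k) ∧
    Module.finrank (ZMod 2) (P2 k) = k - 1 ∧
    uVec k (by omega) ∈ P3 k := by
  have hodd : Odd k := Nat.odd_iff.2 (by omega)
  have hchoose : Odd (k.choose 2) := Xk.odd_choose_two hmod
  have hdisj : Disjoint (P1 k ⊔ P2 k) (P3 k) := by
    rw [Xk.P3_eq_perpSub_starSpan, Xk.P1_sup_P2_eq_starSpan]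
    exact Xk.disjoint_starSpan_perpSub hodd hchoose
  have : NeZero k := ⟨by omega⟩
  refine ⟨?_, hdisj, sup_perpSub_eq_top hdisj, Xk.isIrreducibleSub_P1 (by omega) _,
    Xk.isIrreducibleSub_P2 (by omega) hodd, Xk.isIrreducibleSub_P3 (by omega) hodd hchoose, ?_,
    Xk.uVec_mem_P3 _ hodd hchoose⟩
  · rw [Xk.P2_eq_range_incidence]
    exact Xk.disjoint_span_one_range_incidence (by omega)
  · rw [Xk.P2_eq_range_incidence, Xk.finrank_range_incidence]
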